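/- Let r ≥ 3 and n ≥ 32. If G is an n-vertex K_{r+1}-free graph that is not Hamiltonian, then e(G) ≤ e(T_r(n-1)) + 1, and equality holds if G is obtained from T_r(n-1) by adding a new vertex of degree 1. -/

import Mathlib

/-!
If `d(u) + d(v) ≥ n`, then a Hamiltonian path from `u` to `v` can be rerouted into a Hamiltonian
cycle, so in a maximal non-Hamiltonian graph on `n` vertices all nonadjacent `u ≠ v` satisfy
`d(u) + d(v) < n` (Ore, Bondy–Chvátal). Applied to a nonadjacent pair with the largest degree sum,
this yields a `k` with `1 ≤ k < n / 2` such that at least `k` vertices of `G` have degree at most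
`k` (Pósa). Deleting `m ≤ k` of these destroys at most `m * k` edges and leaves a `K_{r+1}`-free
graph, whence `e(G) ≤ e(T_r(n - m)) + m * k` by Turán. As `e(T_r(j + 1)) - e(T_r(j)) = j - ⌊j / r⌋`,
the right-hand side is at most `e(T_r(n - 1)) + 1` for `m = min k 7`.
-/

section

open Finset SimpleGraph

section Hamiltonian

variable {V : Type*} {G : SimpleGraph V} {u v : V}

lemma mem_edgeSet_of_mem_edgeSet_sup_edge {e : Sym2 V} (he : e ∈ (G ⊔ edge u v).edgeSet)
    (hne : e ≠ s(u, v)) : e ∈ G.edgeSet := by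
  rw [edgeSet_sup] at he
  exact he.resolve_right fun h ↦ hne (edgeSet_edge_subset h)

lemma degree_le_card_filter_adj [Fintype (G.neighborSet v)] [DecidableRel G.Adj] {n : ℕ} {f : ℕ → V}
    (hf : ∀ x, G.Adj v x → ∃ i < n, f i = x) :
    G.degree v ≤ #{i ∈ range n | G.Adj v (f i)} := by
  classical
  rw [← card_neighborFinset_eq_degree]
  refine (card_le_card fun x hx ↦ ?_).trans (card_image_le (f := f))
  rw [mem_neighborFinset] at hx
  obtain ⟨i, hi, rfl⟩ := hf x hx
  exact mem_image_of_mem f (mem_filter.2 ⟨mem_range.2 hi, hx⟩)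

lemma exists_le_card_degree_le_of_degree_add_lt [Fintype V] [DecidableRel G.Adj]
    (hV : 3 ≤ Fintype.card V) (htop : G ≠ ⊤)
    (hdeg : ∀ u v, Gᶜ.Adj u v → G.degree u + G.degree v < Fintype.card V) :
    ∃ k, 1 ≤ k ∧ 2 * k < Fintype.card V ∧ k ≤ #{v | G.degree v ≤ k} := by
  classical
  have hpairs : ({x | Gᶜ.Adj x.1 x.2} : Finset (V × V)).Nonempty := by
    obtain ⟨u, v, huv, hadj⟩ := ne_top_iff_exists_not_adj.1 htop
    exact ⟨(u, v), by simpa using ⟨huv, hadj⟩⟩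
  obtain ⟨⟨u, v⟩, huv, hmax⟩ := exists_max_image _ (fun x ↦ G.degree x.1 + G.degree x.2) hpairs
  simp only [mem_filter_univ, Prod.forall] at huv hmax
  wlog hle : G.degree u ≤ G.degree v generalizing u v
  · exact this v u huv.symm (fun a b hab ↦ (hmax a b hab).trans_eq (add_comm _ _)) (by omega)
  have hlt := hdeg u v huv
  have hcard : #(Gᶜ.neighborFinset v) = Fintype.card V - 1 - G.degree v := by
    rw [card_neighborFinset_eq_degree, degree_compl]
  have hpos : 0 < #(Gᶜ.neighborFinset v) :=
    card_pos.2 ⟨u, (mem_neighborFinset _ _ _).2 huv.symm⟩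
  have hsub : Gᶜ.neighborFinset v ⊆
      ({x | G.degree x ≤ max 1 (G.degree u)} : Finset V) := fun x hx ↦ by
    have := hmax x v ((mem_neighborFinset _ _ _).1 hx).symm
    rw [mem_filter_univ]
    omega
  have := card_le_card hsub
  exact ⟨max 1 (G.degree u), by omega, by omega, by omega⟩

variable [DecidableEq V]

lemma exists_isHamiltonian_walk_of_snd_eq {p : (G ⊔ edge u v).Walk u u}
    (hp : p.IsHamiltonianCycle) (hsnd : v = p.snd) : ∃ q : G.Walk v u, q.IsHamiltonian := by
  have hedge : s(u, v) ∉ p.tail.edges := by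
    have hcycle := hp.isCycle
    have huv : s(u, v) = s(u, p.snd) := congrArg _ hsnd
    rw [← p.cons_tail_eq hcycle.not_nil, Walk.cons_isCycle_iff] at hcycle
    exact huv ▸ hcycle.2
  have htail : ∀ e ∈ p.tail.edges, e ∈ G.edgeSet := fun e he ↦
    mem_edgeSet_of_mem_edgeSet_sup_edge (p.tail.edges_subset_edgeSet he)
      (ne_of_mem_of_not_mem he hedge)
  rw [hsnd]
  refine ⟨p.tail.transfer G htail, fun x ↦ ?_⟩
  rw [Walk.support_transfer]
  exact hp.isHamiltonian_tail x

variable [Fintype V]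

lemma isHamiltonian_of_isHamiltonian_walk_of_adj (hV : 3 ≤ Fintype.card V) {p : G.Walk u v}
    (hp : p.IsHamiltonian) (hvu : G.Adj v u) : G.IsHamiltonian := by
  have hlen := hp.length_eq
  have hedge : s(v, u) ∉ p.edges := fun he ↦ by
    have := hp.isPath.length_eq_one_of_mem_edges (Sym2.eq_swap ▸ he)
    omega
  refine fun _ ↦ ⟨v, .cons hvu p, Walk.isHamiltonianCycle_iff_isCycle_and_length_eq.2
    ⟨(Walk.cons_isCycle_iff _ _).2 ⟨hp.isPath, hedge⟩, ?_⟩⟩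
  rw [Walk.length_cons]
  omega

lemma isHamiltonian_top (hV : 3 ≤ Fintype.card V) : (⊤ : SimpleGraph V).IsHamiltonian := by
  let l := (univ : Finset V).toList
  have hlen : l.length = Fintype.card V := length_toList _
  have hnodup : l.Nodup := nodup_toList _
  have hne : l ≠ [] := List.ne_nil_of_length_pos (by omega)
  have hchain : l.IsChain (⊤ : SimpleGraph V).Adj := List.Pairwise.isChain hnodup
  have hham : (Walk.ofSupport l hne hchain).IsHamiltonian := fun x ↦ by
    rw [Walk.support_ofSupport]
    exact List.count_eq_one_of_mem hnodup (mem_toList.2 (mem_univ x))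
  refine isHamiltonian_of_isHamiltonian_walk_of_adj hV hham ?_
  rw [top_adj, List.head_eq_getElem_zero, List.getLast_eq_getElem, Ne, hnodup.getElem_inj_iff]
  omega

lemma isHamiltonian_or_exists_isHamiltonian_walk_of_sup_edge
    (h : (G ⊔ edge u v).IsHamiltonian) :
    G.IsHamiltonian ∨ ∃ p : G.Walk v u, p.IsHamiltonian := by
  obtain hV | hV := eq_or_ne (Fintype.card V) 1
  · exact .inl (.of_card_eq_one hV)
  have : Nontrivial V := Fintype.one_lt_card_iff_nontrivial.1
    (lt_of_le_of_ne (Fintype.card_pos_iff.2 ⟨u⟩) hV.symm)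
  obtain ⟨p, hp⟩ := h.exists_isHamiltonianCycle u
  by_cases huv : s(u, v) ∈ p.edges
  · right
    have hmem : v ∈ p.toSubgraph.neighborSet u := p.adj_toSubgraph_iff_mem_edges.2 huv
    rw [hp.isCycle.neighborSet_toSubgraph_endpoint] at hmem
    obtain hsnd | hpen := hmem
    · exact exists_isHamiltonian_walk_of_snd_eq hp hsnd
    · have hrev : p.reverse.IsHamiltonianCycle :=
        Walk.isHamiltonianCycle_iff_isCycle_and_length_eq.2
          ⟨hp.isCycle.reverse, p.length_reverse.trans hp.length_eq⟩
      exact exists_isHamiltonian_walk_of_snd_eq hrev (hpen.trans p.snd_reverse.symm)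
  · left
    have hedges : ∀ e ∈ p.edges, e ∈ G.edgeSet := fun e he ↦
      mem_edgeSet_of_mem_edgeSet_sup_edge (p.edges_subset_edgeSet he)
        (ne_of_mem_of_not_mem he huv)
    exact fun _ ↦ ⟨u, p.transfer G hedges, Walk.isHamiltonianCycle_iff_isCycle_and_length_eq.2
      ⟨hp.isCycle.transfer hedges, (p.length_transfer hedges).trans hp.length_eq⟩⟩

lemma isHamiltonian_of_adj_getVert_of_adj_getVert_succ (hV : 3 ≤ Fintype.card V)
    {p : G.Walk u v} (hp : p.IsHamiltonian) {i : ℕ} (hi : i < p.length)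
    (hv : G.Adj v (p.getVert i)) (hu : G.Adj u (p.getVert (i + 1))) : G.IsHamiltonian := by
  let q := (p.take i).append (.cons hv.symm (p.drop (i + 1)).reverse)
  have hdrop : (p.drop (i + 1)).support = p.support.drop (i + 1) := by
    rw [Walk.drop_support_eq_support_drop_min, min_eq_left hi]
  have hq : q.support = p.support.take (i + 1) ++ (p.support.drop (i + 1)).reverse := by
    rw [Walk.support_append, Walk.support_cons, List.tail_cons, Walk.support_reverse,
      Walk.support_take, hdrop]
  have hperm : q.support.Perm p.support := by
    rw [hq]
    nth_rw 3 [← p.support.take_append_drop (i + 1)]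
    exact (List.reverse_perm _).append_left _
  exact isHamiltonian_of_isHamiltonian_walk_of_adj hV
    (fun x ↦ (hperm.count_eq x).trans (hp x)) hu.symm

lemma degree_add_degree_lt_card [DecidableRel G.Adj] (hV : 3 ≤ Fintype.card V)
    (hG : ¬ G.IsHamiltonian) {p : G.Walk u v} (hp : p.IsHamiltonian) :
    G.degree u + G.degree v < Fintype.card V := by
  have hu : G.degree u ≤ #{i ∈ range p.length | G.Adj u (p.getVert (i + 1))} := by
    refine degree_le_card_filter_adj fun x hx ↦ ?_
    obtain ⟨_ | i, rfl, hi⟩ := Walk.mem_support_iff_exists_getVert.1 (hp.mem_support x)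
    · simp at hx
    · exact ⟨i, hi, rfl⟩
  have hv : G.degree v ≤ #{i ∈ range p.length | G.Adj v (p.getVert i)} := by
    refine degree_le_card_filter_adj fun x hx ↦ ?_
    obtain ⟨i, rfl, hi⟩ := Walk.mem_support_iff_exists_getVert.1 (hp.mem_support x)
    refine ⟨i, hi.lt_of_ne ?_, rfl⟩
    rintro rfl
    simp at hx
  have hdisj : Disjoint {i ∈ range p.length | G.Adj u (p.getVert (i + 1))}
      {i ∈ range p.length | G.Adj v (p.getVert i)} :=
    disjoint_filter.2 fun i hi hui hvi ↦
      hG (isHamiltonian_of_adj_getVert_of_adj_getVert_succ hV hp (mem_range.1 hi) hvi hui)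
  have hcard := card_le_card (union_subset (filter_subset _ _) (filter_subset _ _) :
    {i ∈ range p.length | G.Adj u (p.getVert (i + 1))} ∪
      {i ∈ range p.length | G.Adj v (p.getVert i)} ⊆ range p.length)
  rw [card_union_of_disjoint hdisj, card_range] at hcard
  have hlen := hp.length_eq
  omega

lemma isHamiltonian_of_isHamiltonian_sup_edge [DecidableRel G.Adj] (hV : 3 ≤ Fintype.card V)
    (hdeg : Fintype.card V ≤ G.degree u + G.degree v) (h : (G ⊔ edge u v).IsHamiltonian) :
    G.IsHamiltonian := by
  by_contra hG
  obtain ⟨p, hp⟩ := (isHamiltonian_or_exists_isHamiltonian_walk_of_sup_edge h).resolve_left hG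
  have := degree_add_degree_lt_card hV hG hp
  omega

lemma exists_le_card_degree_le_of_not_isHamiltonian [DecidableRel G.Adj]
    (hV : 3 ≤ Fintype.card V) (hG : ¬ G.IsHamiltonian) :
    ∃ k, 1 ≤ k ∧ 2 * k < Fintype.card V ∧ k ≤ #{v | G.degree v ≤ k} := by
  classical
  obtain ⟨H, hGH, hH, hmax⟩ :=
    Finite.exists_le_maximal (p := fun H : SimpleGraph V ↦ ¬ H.IsHamiltonian) hG
  have htop : H ≠ ⊤ := fun h ↦ hH (h ▸ isHamiltonian_top hV)
  have hdeg : ∀ u v, Hᶜ.Adj u v → H.degree u + H.degree v < Fintype.card V := by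
    intro u v huv
    by_contra! hle
    have hsup : ¬ (H ⊔ edge u v).IsHamiltonian := fun h ↦
      hH (isHamiltonian_of_isHamiltonian_sup_edge hV hle h)
    exact huv.2 (hmax hsup le_sup_left (.inr ((edge_adj _ _ _ _).2 ⟨.inl ⟨rfl, rfl⟩, huv.1⟩)))
  obtain ⟨k, hk, hkV, hcard⟩ := exists_le_card_degree_le_of_degree_add_lt hV htop hdeg
  exact ⟨k, hk, hkV, hcard.trans (card_le_card
    (monotone_filter_right _ fun x _ hx ↦ (degree_le_of_le hGH).trans hx))⟩

end Hamiltonian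

section VertexDeletion

variable {V : Type*} [Fintype V] (G : SimpleGraph V) [DecidableRel G.Adj]

lemma card_edgeFinset_eq_card_edgeFinset_induce_compl_singleton_add_degree
    [DecidableEq V] (v : V) :
    #G.edgeFinset = #(G.induce ({v}ᶜ : Set V)).edgeFinset + G.degree v := by
  rw [card_edgeFinset_induce_compl_singleton, card_edgeFinset_deleteIncidenceSet,
    Nat.sub_add_cancel (G.degree_le_card_edgeFinset v)]

lemma card_edgeFinset_le_card_edgeFinset_induce_compl_add_sum_degree
    [DecidableEq V] (S : Finset V) :
    #G.edgeFinset ≤ #(G.induce (S : Set V)ᶜ).edgeFinset + ∑ v ∈ S, G.degree v := by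
  let K := (G.induce (S : Set V)ᶜ).spanningCoe
  have hcover : G.edgeFinset ⊆ K.edgeFinset ∪ S.biUnion (G.incidenceFinset ·) := by
    refine fun e he ↦ ?_
    induction e with | h x y
    rw [mem_edgeFinset, mem_edgeSet] at he
    simp only [mem_union, mem_edgeFinset, mem_edgeSet, mem_biUnion, mem_incidenceFinset,
      mk'_mem_incidenceSet_iff]
    by_cases hx : x ∈ S
    · exact .inr ⟨x, hx, he, .inl rfl⟩
    by_cases hy : y ∈ S
    · exact .inr ⟨y, hy, he, .inr rfl⟩
    · exact .inl (by simp [K, hx, hy, he])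
  have hK : #K.edgeFinset = #(G.induce (S : Set V)ᶜ).edgeFinset := card_edgeFinset_map _ _
  calc #G.edgeFinset ≤ #(K.edgeFinset ∪ S.biUnion (G.incidenceFinset ·)) := card_le_card hcover
    _ ≤ #K.edgeFinset + #(S.biUnion (G.incidenceFinset ·)) := card_union_le _ _
    _ ≤ #K.edgeFinset + ∑ v ∈ S, #(G.incidenceFinset v) := by gcongr; exact card_biUnion_le
    _ = #(G.induce (S : Set V)ᶜ).edgeFinset + ∑ v ∈ S, G.degree v := by
      simp only [hK, card_incidenceFinset_eq_degree]

variable {G}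

lemma card_edgeFinset_le_card_edgeFinset_turanGraph_add_sum_degree {r : ℕ}
    (hG : G.CliqueFree (r + 1)) (S : Finset V) :
    #G.edgeFinset ≤
      #(turanGraph (Fintype.card V - #S) r).edgeFinset + ∑ v ∈ S, G.degree v := by
  classical
  have hcard : Fintype.card ((S : Set V)ᶜ : Set V) = Fintype.card V - #S := by
    rw [Fintype.card_compl_set]
    simp
  have hinduce : #(G.induce (S : Set V)ᶜ).edgeFinset ≤
      #(turanGraph (Fintype.card V - #S) r).edgeFinset := by
    rw [card_edgeFinset_turanGraph, ← hcard]
    exact (hG.comap ⟨(Embedding.induce _).toCopy⟩).card_edgeFinset_le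
  exact (card_edgeFinset_le_card_edgeFinset_induce_compl_add_sum_degree G S).trans
    (Nat.add_le_add_right hinduce _)

end VertexDeletion

section Turan

lemma card_edgeFinset_turanGraph_of_le {n r : ℕ} (h : n ≤ r) :
    #(turanGraph n r).edgeFinset = n.choose 2 := by
  have htop := card_edgeFinset_top_eq_card_choose_two (V := Fin n)
  rw [Fintype.card_fin] at htop
  convert htop
  exact turanGraph_eq_top.2 (.inr h)

lemma card_edgeFinset_turanGraph_succ {r : ℕ} (hr : 0 < r) (n : ℕ) :
    #(turanGraph (n + 1) r).edgeFinset = #(turanGraph n r).edgeFinset + (n - n / r) := by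
  induction n using Nat.strong_induction_on with
  | _ n ih =>
    obtain h | h := lt_or_ge n r
    · rw [card_edgeFinset_turanGraph_of_le h, card_edgeFinset_turanGraph_of_le h.le,
        Nat.div_eq_of_lt h, Nat.choose_succ_succ' n 1, Nat.choose_one_right,
        one_add_one_eq_two, Nat.sub_zero, add_comm]
    · obtain ⟨m, rfl⟩ := Nat.exists_eq_add_of_le' h
      have hdiv := Nat.div_le_self m r
      rw [add_right_comm, card_edgeFinset_turanGraph_add, card_edgeFinset_turanGraph_add,
        ih m (by omega), Nat.add_div_right m hr, add_one_mul m]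
      omega

lemma card_edgeFinset_turanGraph_add_eq_add_sum {r : ℕ} (hr : 0 < r) (n d : ℕ) :
    #(turanGraph (n + d) r).edgeFinset =
      #(turanGraph n r).edgeFinset + ∑ i ∈ range d, (n + i - (n + i) / r) := by
  induction d with
  | zero => simp
  | succ d ih =>
    rw [← add_assoc, card_edgeFinset_turanGraph_succ hr, ih, sum_range_succ, add_assoc]

lemma min_seven_mul_le_sum_add_one {n k : ℕ} (hn : 22 ≤ n) (hkn : 2 * k < n) :
    min k 7 * k ≤
      ∑ i ∈ range (min k 7 - 1), (n - min k 7 + i - (n - min k 7 + i) / 3) + 1 := by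
  obtain h | h := le_total k 7
  · rw [min_eq_left h]
    interval_cases k <;> simp only [Nat.reduceSub, sum_range_succ, sum_range_zero] <;> omega
  · rw [min_eq_right h]
    simp only [Nat.reduceSub, sum_range_succ, sum_range_zero]
    -- The six terms add up to `4 * n - 16`.
    omega

lemma card_edgeFinset_turanGraph_sub_add_mul_le {n r k : ℕ} (hr : 3 ≤ r) (hn : 22 ≤ n)
    (hk : 1 ≤ k) (hkn : 2 * k < n) :
    #(turanGraph (n - min k 7) r).edgeFinset + min k 7 * k ≤
      #(turanGraph (n - 1) r).edgeFinset + 1 := by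
  have hsum : min k 7 * k ≤
      ∑ i ∈ range (min k 7 - 1), (n - min k 7 + i - (n - min k 7 + i) / r) + 1 :=
    (min_seven_mul_le_sum_add_one hn hkn).trans (by gcongr)
  have hadd := card_edgeFinset_turanGraph_add_eq_add_sum (r := r) (by omega)
    (n - min k 7) (min k 7 - 1)
  rw [show n - min k 7 + (min k 7 - 1) = n - 1 by omega] at hadd
  omega

end Turan

-- The bound `22` is sharp for `r = 3`: the complete tripartite graph `K_{11,5,5}` on `21` vertices
-- is not Hamiltonian and has `135 = e(T_3(20)) + 2` edges.
theorem cliqueFree_not_hamiltonian_edge_bound_general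
    {V : Type*} [Fintype V] [DecidableEq V] (G : SimpleGraph V) [DecidableRel G.Adj] (n r : ℕ)
    (hr : 3 ≤ r) (hn : 22 ≤ n) (hcard : Fintype.card V = n)
    (hfree : G.CliqueFree (r + 1)) (hnh : ¬ G.IsHamiltonian) :
    #G.edgeFinset ≤ #(turanGraph (n - 1) r).edgeFinset + 1 ∧
    ((∃ v : V, G.degree v = 1 ∧
        Nonempty ((G.induce ({v}ᶜ : Set V)) ≃g turanGraph (n - 1) r)) →
      #G.edgeFinset = #(turanGraph (n - 1) r).edgeFinset + 1) := by
  subst hcard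
  constructor
  · obtain ⟨k, hk, hkV, hlow⟩ := exists_le_card_degree_le_of_not_isHamiltonian (by omega) hnh
    obtain ⟨S, hS, hScard⟩ := exists_subset_card_eq ((min_le_left k 7).trans hlow)
    have hsum : ∑ v ∈ S, G.degree v ≤ min k 7 * k := by
      rw [← hScard, ← smul_eq_mul]
      exact sum_le_card_nsmul _ _ _ fun v hv ↦ (mem_filter_univ v).1 (hS hv)
    calc #G.edgeFinset
        ≤ #(turanGraph (Fintype.card V - #S) r).edgeFinset + ∑ v ∈ S, G.degree v :=
          card_edgeFinset_le_card_edgeFinset_turanGraph_add_sum_degree hfree S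
      _ ≤ #(turanGraph (Fintype.card V - min k 7) r).edgeFinset + min k 7 * k := by
          rw [hScard]; gcongr
      _ ≤ #(turanGraph (Fintype.card V - 1) r).edgeFinset + 1 :=
          card_edgeFinset_turanGraph_sub_add_mul_le hr hn hk hkV
  · rintro ⟨v, hv, ⟨f⟩⟩
    rw [card_edgeFinset_eq_card_edgeFinset_induce_compl_singleton_add_degree G v, hv,
      f.card_edgeFinset_eq]

end

/-- Theorem 5.4 (r ≥ 3, n ≥ 32): an `n`-vertex `K_{r+1}`-free graph that is not
Hamiltonian has at most `e(T_r(n-1)) + 1` edges, with equality if `G` is the Turán graph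
`T_r(n-1)` plus a new vertex of degree 1. -/
theorem cliqueFree_not_hamiltonian_edge_bound
    {V : Type} [Fintype V] [DecidableEq V]
    (G : SimpleGraph V) [DecidableRel G.Adj] (n r : ℕ)
    (hr : 3 ≤ r) (hn : 32 ≤ n) (hcard : Fintype.card V = n)
    (hfree : G.CliqueFree (r + 1))
    (hnh : ¬ G.IsHamiltonian) :
    G.edgeFinset.card ≤ (SimpleGraph.turanGraph (n - 1) r).edgeFinset.card + 1 ∧
    ((∃ v : V, G.degree v = 1 ∧
        Nonempty ((G.induce ({v}ᶜ : Set V)) ≃g SimpleGraph.turanGraph (n - 1) r)) →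
      G.edgeFinset.card = (SimpleGraph.turanGraph (n - 1) r).edgeFinset.card + 1) :=
  cliqueFree_not_hamiltonian_edge_bound_general G n r hr (by omega) hcard hfree hnh
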